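/- Let n = 2k with k ≥ 2, and define the Boolean function f_n : {0,1}ⁿ → {0,1} by f_n(x) = 1 if and only if |x| ≥ k+1, or (|x| ≥ k and for every j ∈ {1,…,k} not both x_{2j−1} = 1 and x_{2j} = 1), where |x| = Σᵢ xᵢ. Suppose p is a real multilinear polynomial of degree at most 2 with nonnegative coefficients and no constant term, t ≥ 0, and for every x ∈ {0,1}ⁿ, f_n(x) = 1 iff p(x) ≥ t. Then for every pair 1 ≤ i < j ≤ k there exist a, b ∈ {0,1} such that the coefficient of x_{2i−a} x_{2j−b} in p is nonzero. Consequently, p has at least k(k−1)/2 quadratic terms, i.e., Ω(n²) terms. -/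

import Mathlib

open Finset

/-- Evaluation of a multilinear real polynomial in `n` variables given by its coefficient
function `c` (where `c S` is the coefficient of the monomial `∏ i ∈ S, x i`). -/
noncomputable def mEval {n : ℕ} (c : Finset (Fin n) → ℝ) (x : Fin n → ℝ) : ℝ :=
  ∑ S : Finset (Fin n), c S * ∏ i ∈ S, x i

/-- The real value of a Boolean. -/
noncomputable def bval (b : Bool) : ℝ := if b then 1 else 0

/-- The weight (number of ones) of a Boolean vector. -/
def wt {n : ℕ} (x : Fin n → Bool) : ℕ := ∑ i, if x i then 1 else 0

/-!
Nonnegative coefficients make a polynomial supermodular on the cube, and the absence of monomials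
containing both `u` and `v` makes it modular in the directions `u` and `v`. Fix one variable in each
block other than `i` and `j`, and complete this choice to a point of weight `k` with two variables
from blocks `i = {a, a'}` and `j = {b, b'}`. If neither `ab` nor `a'b'` divides a monomial of `p`,
then `p(ab) + p(a'b') ≤ p(aa') + p(bb')`; but `f_n` accepts both points on the left and rejects both
points on the right. So one of `ab`, `a'b'` is a monomial, and likewise one of `ab'`, `a'b`.
-/

section ZetaTransform

variable {α M : Type*} [DecidableEq α]

/-- The zeta transform of `c`, which is the value of the multilinear polynomial with coefficients
`c` at the indicator vector of `X`. -/
def zetaTransform [AddCommMonoid M] (c : Finset α → M) (X : Finset α) : M :=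
  ∑ T ∈ X.powerset, c T

theorem powerset_inter_powerset (X Y : Finset α) :
    X.powerset ∩ Y.powerset = (X ∩ Y).powerset := by
  ext T
  simp only [mem_inter, mem_powerset, subset_inter_iff]

theorem powerset_union_powerset_subset (X Y : Finset α) :
    X.powerset ∪ Y.powerset ⊆ (X ∪ Y).powerset :=
  union_subset (powerset_mono.2 subset_union_left) (powerset_mono.2 subset_union_right)

theorem zetaTransform_add_le_union_add_inter [AddCommMonoid M] [PartialOrder M]
    [IsOrderedAddMonoid M] {c : Finset α → M} (hc : ∀ T, 0 ≤ c T) (X Y : Finset α) :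
    zetaTransform c X + zetaTransform c Y ≤ zetaTransform c (X ∪ Y) + zetaTransform c (X ∩ Y) := by
  unfold zetaTransform
  rw [← sum_union_inter, powerset_inter_powerset]
  gcongr 1
  exact sum_le_sum_of_subset_of_nonneg (powerset_union_powerset_subset X Y) fun T _ _ => hc T

theorem zetaTransform_union_add_inter [AddCommMonoid M] {c : Finset α → M} {X Y : Finset α}
    (h : ∀ T ⊆ X ∪ Y, c T ≠ 0 → T ⊆ X ∨ T ⊆ Y) :
    zetaTransform c (X ∪ Y) + zetaTransform c (X ∩ Y) = zetaTransform c X + zetaTransform c Y := by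
  unfold zetaTransform
  rw [← sum_union_inter (s₁ := X.powerset), powerset_inter_powerset,
    sum_subset (powerset_union_powerset_subset X Y)]
  intro T hT hT'
  by_contra hcT
  exact hT' (by simpa using h T (mem_powerset.1 hT) hcT)

theorem insert_union_insert_self (u v : α) (R : Finset α) :
    insert u R ∪ insert v R = insert u (insert v R) := by
  rw [insert_union, union_eq_right.2 (subset_insert v R)]

theorem insert_inter_insert_self {u v : α} (huv : u ≠ v) (R : Finset α) :
    insert u R ∩ insert v R = R := by
  ext w
  grind

theorem zetaTransform_insert_add_le [AddCommMonoid M] [PartialOrder M] [IsOrderedAddMonoid M]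
    {c : Finset α → M} (hc : ∀ T, 0 ≤ c T) {u v : α} (huv : u ≠ v) (R : Finset α) :
    zetaTransform c (insert u R) + zetaTransform c (insert v R) ≤
      zetaTransform c (insert u (insert v R)) + zetaTransform c R := by
  simpa only [insert_union_insert_self, insert_inter_insert_self huv] using
    zetaTransform_add_le_union_add_inter hc (insert u R) (insert v R)

theorem zetaTransform_insert_insert_add [AddCommMonoid M] {c : Finset α → M} {u v : α}
    (huv : u ≠ v) (h : ∀ T, c T ≠ 0 → ¬{u, v} ⊆ T) (R : Finset α) :
    zetaTransform c (insert u (insert v R)) + zetaTransform c R =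
      zetaTransform c (insert u R) + zetaTransform c (insert v R) := by
  have hsplit : ∀ T ⊆ insert u R ∪ insert v R, c T ≠ 0 → T ⊆ insert u R ∨ T ⊆ insert v R := by
    intro T hT hcT
    have hnot := h T hcT
    grind
  simpa only [insert_union_insert_self, insert_inter_insert_self huv] using
    zetaTransform_union_add_inter hsplit

theorem exists_ne_zero_of_zetaTransform_exchange_lt [AddCommGroup M] [LinearOrder M]
    [IsOrderedAddMonoid M] {c : Finset α → M} (hc : ∀ T, 0 ≤ c T) {a a' b b' : α} {R : Finset α}
    (haa' : a ≠ a') (hbb' : b ≠ b') (hab : a ≠ b) (hab' : a' ≠ b')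
    (hlt : zetaTransform c (insert a (insert a' R)) + zetaTransform c (insert b (insert b' R)) <
      zetaTransform c (insert a (insert b R)) + zetaTransform c (insert a' (insert b' R))) :
    ∃ T, c T ≠ 0 ∧ ({a, b} ⊆ T ∨ {a', b'} ⊆ T) := by
  by_contra! hcon
  have hmod := zetaTransform_insert_insert_add hab (fun T hT => (hcon T hT).1) R
  have hmod' := zetaTransform_insert_insert_add hab' (fun T hT => (hcon T hT).2) R
  have hsuper := zetaTransform_insert_add_le hc haa' R
  have hsuper' := zetaTransform_insert_add_le hc hbb' R
  grind

end ZetaTransform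

section Blocks

variable {ι : Type*} [Fintype ι]

/-- The polynomial with coefficients `c` and the threshold `t` represent, on the sets of
`Fintype.card ι` variables, the function accepting the sets that contain no full block
`{i} × Fin 2`. This is `f_n` on the points of weight `k`. -/
def IsMiddleLayerRep (c : Finset (ι × Fin 2) → ℝ) (t : ℝ) : Prop :=
  ∀ X : Finset (ι × Fin 2), X.card = Fintype.card ι →
    (t ≤ zetaTransform c X ↔ ∀ m, ¬∀ a, (m, a) ∈ X)

section ChosenBlocks

variable [DecidableEq ι]

/-- One variable from each block other than `i` and `j`, the common part of the points compared in
the exchange argument. -/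
def offBlocks (i j : ι) : Finset (ι × Fin 2) := {i, j}ᶜ ×ˢ {0}

theorem mem_offBlocks {i j : ι} {p : ι × Fin 2} :
    p ∈ offBlocks i j ↔ (p.1 ≠ i ∧ p.1 ≠ j) ∧ p.2 = 0 := by
  rw [offBlocks, mem_product]
  simp

theorem card_insert_insert_offBlocks {i j : ι} (hij : i ≠ j) {p q : ι × Fin 2} (hpq : p ≠ q)
    (hp : p.1 = i ∨ p.1 = j) (hq : q.1 = i ∨ q.1 = j) :
    (insert p (insert q (offBlocks i j))).card = Fintype.card ι := by
  have hq' : q ∉ offBlocks i j := by grind [mem_offBlocks]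
  have hp' : p ∉ insert q (offBlocks i j) := by grind [mem_offBlocks]
  rw [card_insert_of_notMem hp', card_insert_of_notMem hq', offBlocks, card_product,
    card_singleton, mul_one, add_assoc, one_add_one_eq_two, ← card_pair hij, card_compl_add_card]

theorem IsMiddleLayerRep.le_zetaTransform_transversal {c : Finset (ι × Fin 2) → ℝ} {t : ℝ}
    (h : IsMiddleLayerRep c t) {i j : ι} (hij : i ≠ j) (a b : Fin 2) :
    t ≤ zetaTransform c (insert (i, a) (insert (j, b) (offBlocks i j))) := by
  refine (h _ (card_insert_insert_offBlocks hij (by simp [hij]) (.inl rfl) (.inr rfl))).2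
    fun m hm => ?_
  have hzero := hm 0
  have hone := hm 1
  grind [mem_offBlocks]

theorem IsMiddleLayerRep.zetaTransform_fullBlock_lt {c : Finset (ι × Fin 2) → ℝ} {t : ℝ}
    (h : IsMiddleLayerRep c t) {i j m : ι} (hij : i ≠ j) (hm : m = i ∨ m = j) {a a' : Fin 2}
    (ha : a ≠ a') : zetaTransform c (insert (m, a) (insert (m, a') (offBlocks i j))) < t := by
  rw [← not_le, h _ (card_insert_insert_offBlocks hij (by simp [ha]) hm hm), not_forall_not]
  refine ⟨m, fun d => ?_⟩
  obtain rfl | rfl : d = a ∨ d = a' := by omega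
  all_goals simp

theorem IsMiddleLayerRep.exists_mixed {c : Finset (ι × Fin 2) → ℝ} {t : ℝ}
    (h : IsMiddleLayerRep c t) (hc : ∀ T, 0 ≤ c T) {i j : ι} (hij : i ≠ j) {a a' b b' : Fin 2}
    (ha : a ≠ a') (hb : b ≠ b') :
    ∃ T, c T ≠ 0 ∧ ({(i, a), (j, b)} ⊆ T ∨ {(i, a'), (j, b')} ⊆ T) := by
  refine exists_ne_zero_of_zetaTransform_exchange_lt hc (R := offBlocks i j)
    (by simp [ha]) (by simp [hb]) (by simp [hij]) (by simp [hij]) ?_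
  exact (add_lt_add (h.zetaTransform_fullBlock_lt hij (.inl rfl) ha)
    (h.zetaTransform_fullBlock_lt hij (.inr rfl) hb)).trans_le
    (add_le_add (h.le_zetaTransform_transversal hij a b)
      (h.le_zetaTransform_transversal hij a' b'))

theorem eq_pair_of_subset_of_card_le_two {α : Type*} [DecidableEq α] {T : Finset α} {u v : α}
    (huv : u ≠ v) (h : {u, v} ⊆ T) (hT : T.card ≤ 2) : {u, v} = T :=
  eq_of_subset_of_card_le h (by rwa [card_pair huv])

theorem IsMiddleLayerRep.coeff_pair_ne_zero_or {c : Finset (ι × Fin 2) → ℝ} {t : ℝ}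
    (h : IsMiddleLayerRep c t) (hc : ∀ T, 0 ≤ c T) (hdeg : ∀ T, c T ≠ 0 → T.card ≤ 2) {i j : ι}
    (hij : i ≠ j) {a a' b b' : Fin 2} (ha : a ≠ a') (hb : b ≠ b') :
    c {(i, a), (j, b)} ≠ 0 ∨ c {(i, a'), (j, b')} ≠ 0 := by
  obtain ⟨T, hT, h | h⟩ := h.exists_mixed hc hij ha hb
  · exact .inl (by rwa [eq_pair_of_subset_of_card_le_two (by simp [hij]) h (hdeg T hT)])
  · exact .inr (by rwa [eq_pair_of_subset_of_card_le_two (by simp [hij]) h (hdeg T hT)])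

theorem IsMiddleLayerRep.two_le_card_mixed {c : Finset (ι × Fin 2) → ℝ} {t : ℝ}
    (h : IsMiddleLayerRep c t) (hc : ∀ T, 0 ≤ c T) (hdeg : ∀ T, c T ≠ 0 → T.card ≤ 2) {i j : ι}
    (hij : i ≠ j) :
    2 ≤ (univ.filter fun T => (c T ≠ 0 ∧ T.card = 2) ∧ T.image Prod.fst = {i, j}).card := by
  obtain ⟨a, ha⟩ : ∃ a, c {(i, a), (j, a)} ≠ 0 := by
    simpa using h.coeff_pair_ne_zero_or hc hdeg hij zero_ne_one zero_ne_one
  obtain ⟨b, b', hbb', hb⟩ : ∃ b b', b ≠ b' ∧ c {(i, b), (j, b')} ≠ 0 :=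
    (h.coeff_pair_ne_zero_or hc hdeg hij zero_ne_one one_ne_zero).elim
      (fun hb => ⟨0, 1, zero_ne_one, hb⟩) fun hb => ⟨1, 0, one_ne_zero, hb⟩
  have hne : ({(i, a), (j, a)} : Finset (ι × Fin 2)) ≠ {(i, b), (j, b')} := by
    intro heq
    have hi : (i, b) ∈ ({(i, a), (j, a)} : Finset (ι × Fin 2)) := by simp [heq]
    have hj : (j, b') ∈ ({(i, a), (j, a)} : Finset (ι × Fin 2)) := by simp [heq]
    simp only [mem_insert, mem_singleton, Prod.mk.injEq, hij, hij.symm, true_and, false_and,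
      or_false, false_or] at hi hj
    exact hbb' (hi.trans hj.symm)
  refine one_lt_card.2 ⟨_, ?_, _, ?_, hne⟩ <;>
    simp [ha, hb, hij, image_insert]

end ChosenBlocks

theorem IsMiddleLayerRep.le_card_quadratic {c : Finset (ι × Fin 2) → ℝ} {t : ℝ}
    (h : IsMiddleLayerRep c t) (hc : ∀ T, 0 ≤ c T) (hdeg : ∀ T, c T ≠ 0 → T.card ≤ 2) :
    Fintype.card ι * (Fintype.card ι - 1) ≤
      (univ.filter fun T => c T ≠ 0 ∧ T.card = 2).card := by
  classical
  set quadratic := univ.filter fun T => c T ≠ 0 ∧ T.card = 2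
  set blockPairs := powersetCard 2 (univ : Finset ι)
  calc
    _ = 2 * blockPairs.card := by
      rw [card_powersetCard, card_univ, Nat.choose_two_right,
        Nat.mul_div_cancel' (Nat.even_mul_pred_self _).two_dvd]
    _ ≤ (quadratic.filter fun T => T.image Prod.fst ∈ blockPairs).card := by
      refine mul_card_image_le_card_of_maps_to (fun T hT => (mem_filter.1 hT).2) 2 fun s hs => ?_
      obtain ⟨i, j, hij, rfl⟩ := card_eq_two.1 (mem_powersetCard.1 hs).2
      refine (h.two_le_card_mixed hc hdeg hij).trans (card_le_card fun T hT => ?_)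
      grind
    _ ≤ quadratic.card := card_filter_le _ _

end Blocks

section BooleanVectors

theorem wt_decide_mem {n : ℕ} (X : Finset (Fin n)) : wt (fun v => decide (v ∈ X)) = X.card := by
  simp [wt]

theorem mEval_bval_decide_mem {n : ℕ} (c : Finset (Fin n) → ℝ) (X : Finset (Fin n)) :
    mEval c (fun v => bval (decide (v ∈ X))) = zetaTransform c X := by
  simp only [mEval, bval, decide_eq_true_eq, prod_boole, mul_ite, mul_one, mul_zero,
    ← subset_iff]
  rw [← sum_filter, zetaTransform, filter_subset_univ]

theorem zetaTransform_map {α β M : Type*} [AddCommMonoid M]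
    (c : Finset β → M) (e : α ↪ β) (X : Finset α) :
    zetaTransform c (X.map e) = zetaTransform (fun T => c (T.map e)) X := by
  symm
  refine sum_nbij (fun T => T.map e) ?_ (map_injective e).injOn ?_ fun _ _ => rfl
  · simp
  · intro T hT
    obtain ⟨S, hS, rfl⟩ := subset_map_iff.1 (mem_powerset.1 hT)
    exact ⟨S, mem_powerset.2 hS, rfl⟩

/-- The variables of `f_n` sorted into blocks: the `i`-th block consists of the variables
`2 * i` and `2 * i + 1`. -/
def blockEquiv (k : ℕ) : Fin k × Fin 2 ≃ Fin (2 * k) where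
  toFun p := ⟨2 * p.1 + p.2, by omega⟩
  invFun v := (⟨v / 2, by omega⟩, ⟨v % 2, by omega⟩)
  left_inv p := by
    ext <;> simp only <;> omega
  right_inv v := by
    ext
    simp only
    omega

theorem isMiddleLayerRep_blockEquiv {k : ℕ} {coef : Finset (Fin (2 * k)) → ℝ} {t : ℝ}
    (hrep : ∀ x : Fin (2 * k) → Bool, wt x = k → (t ≤ mEval coef (fun v => bval (x v)) ↔
      ∀ j, ¬∀ a, x (blockEquiv k (j, a)) = true)) :
    IsMiddleLayerRep (fun T => coef ((blockEquiv k).finsetCongr T)) t := by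
  intro X hX
  have hX' := hrep (fun v => decide (v ∈ (blockEquiv k).finsetCongr X))
    (by rw [wt_decide_mem]; simpa using hX)
  rw [mEval_bval_decide_mem, Equiv.finsetCongr_apply, zetaTransform_map] at hX'
  refine hX'.trans (forall_congr' fun j => not_congr (forall_congr' fun a => ?_))
  exact decide_eq_true_iff.trans (mem_map' (blockEquiv k).toEmbedding)

end BooleanVectors

theorem f_n_positive_qtf_lower_general {k : ℕ} {coef : Finset (Fin (2 * k)) → ℝ} {t : ℝ}
    (hdeg : ∀ T, coef T ≠ 0 → T.card ≤ 2) (hnonneg : ∀ T, 0 ≤ coef T)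
    (hrep : ∀ x : Fin (2 * k) → Bool, wt x = k → (t ≤ mEval coef (fun v => bval (x v)) ↔
      ∀ j, ¬∀ a, x (blockEquiv k (j, a)) = true)) :
    (∀ i j : Fin k, i ≠ j → ∀ a a' b b' : Fin 2, a ≠ a' → b ≠ b' →
      coef {blockEquiv k (i, a), blockEquiv k (j, b)} ≠ 0 ∨
      coef {blockEquiv k (i, a'), blockEquiv k (j, b')} ≠ 0) ∧
    k * (k - 1) ≤ (univ.filter (fun T => coef T ≠ 0 ∧ T.card = 2)).card := by
  let c : Finset (Fin k × Fin 2) → ℝ := fun T => coef ((blockEquiv k).finsetCongr T)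
  have hc : ∀ T, 0 ≤ c T := fun _ => hnonneg _
  have hcdeg : ∀ T, c T ≠ 0 → T.card ≤ 2 := fun T hT => by simpa using hdeg _ hT
  have hcrep : IsMiddleLayerRep c t := isMiddleLayerRep_blockEquiv hrep
  refine ⟨fun i j hij a a' b b' ha hb => ?_, ?_⟩
  · simpa [c] using hcrep.coeff_pair_ne_zero_or hc hcdeg hij ha hb
  · calc
      k * (k - 1) ≤ (univ.filter fun T => c T ≠ 0 ∧ T.card = 2).card := by
        simpa using hcrep.le_card_quadratic hc hcdeg
      _ = (univ.filter fun T => coef T ≠ 0 ∧ T.card = 2).card :=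
        card_equiv (blockEquiv k).finsetCongr fun T => by
          rw [mem_filter_univ, mem_filter_univ]
          simp [c]

/-- Every positive QTF representation of `f_n` (with `n = 2k`, `k ≥ 2`) contains, for every
pair of blocks `i < j`, a mixed quadratic term between the blocks with nonzero coefficient;
consequently it has at least `k(k-1)/2` quadratic terms, i.e. `Ω(n²)` terms.
(Variables are indexed `0, …, 2k-1`; block `i` consists of indices `2i, 2i+1`.) -/
theorem f_n_positive_qtf_lower (k : ℕ) (hk : 2 ≤ k) (f : (Fin (2 * k) → Bool) → Bool)
    (hf : ∀ x, f x = true ↔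
      (k + 1 ≤ wt x ∨ (k ≤ wt x ∧
        ∀ j : Fin k, ¬(x ⟨2 * j, by omega⟩ = true ∧ x ⟨2 * j + 1, by omega⟩ = true))))
    (coef : Finset (Fin (2 * k)) → ℝ)
    (hdeg : ∀ T, coef T ≠ 0 → T.card ≤ 2)
    (hnonneg : ∀ T, 0 ≤ coef T)
    (hconst : coef ∅ = 0)
    (t : ℝ) (ht : 0 ≤ t)
    (hrep : ∀ x : Fin (2 * k) → Bool, f x = true ↔ t ≤ mEval coef (fun i => bval (x i))) :
    (∀ i j : Fin k, i < j → ∃ a b : Fin 2,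
      coef {⟨2 * (i : ℕ) + (a : ℕ), by omega⟩, ⟨2 * (j : ℕ) + (b : ℕ), by omega⟩} ≠ 0) ∧
    k * (k - 1) / 2 ≤ (Finset.univ.filter (fun T => coef T ≠ 0 ∧ T.card = 2)).card := by
  obtain ⟨hmixed, hcard⟩ := f_n_positive_qtf_lower_general hdeg hnonneg fun x hx => by
    rw [← hrep, hf]
    simp [hx, Fin.forall_fin_two, blockEquiv]
  exact ⟨fun i j hij => (hmixed i j hij.ne 0 1 0 1 zero_ne_one zero_ne_one).elim
    (fun h => ⟨0, 0, h⟩) (fun h => ⟨1, 1, h⟩), (Nat.div_le_self _ _).trans hcard⟩
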